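/- Smoothness across knots: let ξ be a knot vector, p ≥ 1 a degree, i an index, t a real number, and 1 ≤ k ≤ p. Suppose exactly k of the knots ξ i, ξ (i+1), …, ξ (i+p+1) are equal to t (i.e. t is a knot of multiplicity k for the basis function N i p). Then there exists an open neighborhood of t on which N i p is (p − k)-times continuously differentiable. -/

import Mathlib

/-- Cox–de Boor B-spline basis functions, with the convention that any term whose
denominator vanishes is taken to be `0`. -/
noncomputable def bspline (ξ : ℕ → ℝ) : ℕ → ℕ → ℝ → ℝ
  | i, 0, x => if ξ i ≤ x ∧ x < ξ (i + 1) then 1 else 0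
  | i, p + 1, x =>
      (if ξ (i + p + 1) - ξ i = 0 then 0
        else (x - ξ i) / (ξ (i + p + 1) - ξ i) * bspline ξ i p x) +
      (if ξ (i + p + 2) - ξ (i + 1) = 0 then 0
        else (ξ (i + p + 2) - x) / (ξ (i + p + 2) - ξ (i + 1)) * bspline ξ (i + 1) p x)



/-- Cox–de Boor recursion with constant initial data `c`. -/
noncomputable def bsAux (ξ c : ℕ → ℝ) : ℕ → ℕ → ℝ → ℝ
  | i, 0, _ => c i
  | i, p + 1, x =>
      (x - ξ i) / (ξ (i + p + 1) - ξ i) * bsAux ξ c i p x +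
      (ξ (i + p + 2) - x) / (ξ (i + p + 2) - ξ (i + 1)) * bsAux ξ c (i + 1) p x

/-- left data -/
noncomputable def bsL (ξ : ℕ → ℝ) (t : ℝ) (j : ℕ) : ℝ :=
  if ξ j < t ∧ t ≤ ξ (j + 1) then 1 else 0

/-- right data -/
noncomputable def bsR (ξ : ℕ → ℝ) (t : ℝ) (j : ℕ) : ℝ :=
  if ξ j ≤ t ∧ t < ξ (j + 1) then 1 else 0

/-- jump polynomial -/
noncomputable def bsJ (ξ : ℕ → ℝ) (t : ℝ) : ℕ → ℕ → ℝ → ℝ :=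
  bsAux ξ (fun j => bsR ξ t j - bsL ξ t j)

lemma bsAux_sub (ξ c d : ℕ → ℝ) (p : ℕ) : ∀ i x,
    bsAux ξ (fun j => c j - d j) i p x = bsAux ξ c i p x - bsAux ξ d i p x := by
  induction p with
  | zero => intro i x; simp [bsAux]
  | succ p ih => intro i x; simp only [bsAux, ih]; ring

lemma bsAux_contDiff (ξ c : ℕ → ℝ) (n : WithTop ℕ∞) (p : ℕ) : ∀ i,
    ContDiff ℝ n (bsAux ξ c i p) := by
  induction p with
  | zero => intro i; exact contDiff_const
  | succ p ih =>
    intro i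
    have h1 := ih i
    have h2 := ih (i + 1)
    have : bsAux ξ c i (p + 1) = fun x =>
      (x - ξ i) / (ξ (i + p + 1) - ξ i) * bsAux ξ c i p x +
      (ξ (i + p + 2) - x) / (ξ (i + p + 2) - ξ (i + 1)) * bsAux ξ c (i + 1) p x := by
      funext x; simp only [bsAux]
    rw [this]
    exact (((contDiff_id.sub contDiff_const).div_const _).mul h1).add
      (((contDiff_const.sub contDiff_id).div_const _).mul h2)

lemma bsAux_hasDerivAt (ξ c : ℕ → ℝ) (hm : Monotone ξ) (p : ℕ) : ∀ i x,
    HasDerivAt (bsAux ξ c i (p + 1))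
      ((p + 1 : ℝ) * (bsAux ξ c i p x / (ξ (i + p + 1) - ξ i) -
        bsAux ξ c (i + 1) p x / (ξ (i + p + 2) - ξ (i + 1)))) x := by
  induction p with
  | zero =>
    intro i x
    have : bsAux ξ c i (0 + 1) = fun x =>
      (x - ξ i) / (ξ (i + 0 + 1) - ξ i) * c i +
      (ξ (i + 0 + 2) - x) / (ξ (i + 0 + 2) - ξ (i + 1)) * c (i + 1) := by
      funext x; simp only [bsAux]
    rw [this]
    have h := ((((hasDerivAt_id x).sub_const (ξ i)).div_const (ξ (i + 0 + 1) - ξ i)).mul_const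
      (c i)).add ((((hasDerivAt_id x).const_sub (ξ (i + 0 + 2))).div_const
      (ξ (i + 0 + 2) - ξ (i + 1))).mul_const (c (i + 1)))
    refine h.congr_deriv ?_
    simp only [bsAux]
    push_cast
    ring
  | succ p ih =>
    intro i x
    have : bsAux ξ c i (p + 1 + 1) = fun x =>
      (x - ξ i) / (ξ (i + (p + 1) + 1) - ξ i) * bsAux ξ c i (p + 1) x +
      (ξ (i + (p + 1) + 2) - x) / (ξ (i + (p + 1) + 2) - ξ (i + 1)) *
        bsAux ξ c (i + 1) (p + 1) x := by
      funext x; rw [bsAux]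
    rw [this]
    have h := ((((hasDerivAt_id x).sub_const (ξ i)).div_const (ξ (i + (p + 1) + 1) - ξ i)).mul
      (ih i x)).add ((((hasDerivAt_id x).const_sub (ξ (i + (p + 1) + 2))).div_const
      (ξ (i + (p + 1) + 2) - ξ (i + 1))).mul (ih (i + 1) x))
    refine h.congr_deriv ?_
    simp only [bsAux, id]
    have e1 : i + (p + 1) + 1 = i + p + 2 := by ring
    have e2 : i + (p + 1) + 2 = i + p + 3 := by ring
    have e3 : i + 1 + p + 1 = i + p + 2 := by ring
    have e4 : i + 1 + p + 2 = i + p + 3 := by ring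
    have e5 : i + 1 + 1 = i + 2 := by ring
    rw [e1, e2, e3, e4, e5]
    push_cast
    generalize bsAux ξ c i p x = A
    generalize bsAux ξ c (i + 1) p x = B
    generalize bsAux ξ c (i + 2) p x = C
    have m0 : ξ i ≤ ξ (i + 1) := hm (by omega)
    have m1 : ξ (i + 1) ≤ ξ (i + p + 2) := hm (by omega)
    have m2 : ξ (i + p + 2) ≤ ξ (i + p + 3) := hm (by omega)
    generalize ξ (i + p + 1) - ξ i = dA
    generalize ξ (i + p + 3) - ξ (i + 2) = dC
    generalize ξ i = a at *
    generalize ξ (i + 1) = b at *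
    generalize ξ (i + p + 2) = f at *
    generalize ξ (i + p + 3) = g at *
    have key : (-(x - a) / (f - a) + (g - x) / (g - b)) * (B / (f - b)) =
        ((f - x) / (f - a) - (x - b) / (g - b)) * (B / (f - b)) := by
      rcases eq_or_lt_of_le m1 with h | h
      · simp [h]
      · congr 1
        have : f - a ≠ 0 := by linarith
        have : g - b ≠ 0 := by linarith
        field_simp
        ring
    linear_combination ((p : ℝ) + 1) * key

lemma bsJ_left (ξ : ℕ → ℝ) (hm : Monotone ξ) (t : ℝ) (q : ℕ) : ∀ i, ξ i < t →
    ξ (i + 1) = t → ξ (i + q + 1) = t → bsJ ξ t i q t = -1 := by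
  induction q with
  | zero =>
    intro i h0 h1 _
    simp [bsJ, bsAux, bsR, bsL, h0, h1]
  | succ q ih =>
    intro i h0 h1 h2
    have h2' : ξ (i + q + 2) = t := h2
    have h3 : ξ (i + q + 1) = t :=
      le_antisymm (h2' ▸ hm (by omega)) (h1 ▸ hm (by omega))
    have := ih i h0 h1 h3
    simp only [bsJ, bsAux] at this ⊢
    rw [this, h3, h2', h1]
    have : t - ξ i ≠ 0 := by linarith
    simp [this]

lemma bsJ_right (ξ : ℕ → ℝ) (hm : Monotone ξ) (t : ℝ) (q : ℕ) : ∀ i, ξ i = t →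
    ξ (i + q) = t → t < ξ (i + q + 1) → bsJ ξ t i q t = 1 := by
  induction q with
  | zero =>
    intro i h0 _ h1
    have h1' : t < ξ (i + 1) := h1
    simp [bsJ, bsAux, bsR, bsL, h0, h1']
  | succ q ih =>
    intro i h0 h1 h2
    have h2' : t < ξ (i + q + 2) := h2
    have h1' : ξ (i + q + 1) = t := h1
    have h3 : ξ (i + 1) = t :=
      le_antisymm (h1' ▸ hm (by omega)) (h0 ▸ hm (by omega))
    have := ih (i + 1) h3 (by rw [← h1']; congr 1; ring)
      (by convert h2' using 2; ring)
    simp only [bsJ, bsAux] at this ⊢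
    rw [this, h3, h1', h0]
    have : ξ (i + q + 2) - t ≠ 0 := by linarith
    simp [this]

lemma bsJ_zero (ξ : ℕ → ℝ) (hm : Monotone ξ) (t : ℝ) (q : ℕ) : ∀ i,
    ¬ (ξ i = t ∧ ξ (i + q) = t) → ¬ (ξ (i + 1) = t ∧ ξ (i + q + 1) = t) →
    bsJ ξ t i q t = 0 := by
  induction q with
  | zero =>
    intro i h0 h1
    have h0' : ξ i ≠ t := by simpa using h0
    have h1' : ξ (i + 1) ≠ t := by simpa using h1
    have e0 : ξ i ≤ t ↔ ξ i < t := ⟨fun h => lt_of_le_of_ne h h0', le_of_lt⟩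
    have e1 : t ≤ ξ (i + 1) ↔ t < ξ (i + 1) := ⟨fun h => lt_of_le_of_ne h h1'.symm, le_of_lt⟩
    simp [bsJ, bsAux, bsR, bsL, e0, e1]
  | succ q ih =>
    intro i h0 h1
    have h0' : ¬ (ξ i = t ∧ ξ (i + q + 1) = t) := h0
    have h1' : ¬ (ξ (i + 1) = t ∧ ξ (i + q + 2) = t) := h1
    have hrec : bsJ ξ t i (q + 1) t =
      (t - ξ i) / (ξ (i + q + 1) - ξ i) * bsJ ξ t i q t +
      (ξ (i + q + 2) - t) / (ξ (i + q + 2) - ξ (i + 1)) * bsJ ξ t (i + 1) q t := by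
      simp only [bsJ, bsAux]
    rw [hrec]
    have e1 : i + 1 + q = i + q + 1 := by ring
    have e2 : i + 1 + q + 1 = i + q + 2 := by ring
    by_cases hmid : ξ (i + 1) = t ∧ ξ (i + q + 1) = t
    · obtain ⟨a, b⟩ := hmid
      have l0 : ξ i < t := lt_of_le_of_ne (a ▸ hm (by omega)) (fun h => h0' ⟨h, b⟩)
      have l1 : t < ξ (i + q + 2) :=
        lt_of_le_of_ne (b ▸ hm (by omega)) (fun h => h1' ⟨a, h.symm⟩)
      rw [bsJ_left ξ hm t q i l0 a b, bsJ_right ξ hm t q (i + 1) a (by rw [e1, b])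
        (by rw [e2]; exact l1), a, b, div_self (by linarith), div_self (by linarith)]
      ring
    · have T1 : (t - ξ i) / (ξ (i + q + 1) - ξ i) * bsJ ξ t i q t = 0 := by
        by_cases h : ξ i = t
        · simp [h]
        · rw [ih i (fun hh => h hh.1) hmid, mul_zero]
      have T2 : (ξ (i + q + 2) - t) / (ξ (i + q + 2) - ξ (i + 1)) * bsJ ξ t (i + 1) q t = 0 := by
        by_cases h : ξ (i + q + 2) = t
        · simp [h]
        · rw [ih (i + 1) (by rw [e1]; exact hmid) (by rw [e2]; exact fun hh => h hh.2), mul_zero]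
      rw [T1, T2, add_zero]

/-- truncated jump -/
noncomputable def bsH (ξ : ℕ → ℝ) (t : ℝ) (i p : ℕ) (x : ℝ) : ℝ :=
  if x ≤ t then 0 else bsJ ξ t i p x

lemma piecewise_hasDerivAt (f f' : ℝ → ℝ) (t : ℝ) (hf : ∀ x, HasDerivAt f (f' x) x)
    (h0 : f t = 0) (h1 : f' t = 0) (x : ℝ) :
    HasDerivAt (fun x => if x ≤ t then 0 else f x) (if x ≤ t then 0 else f' x) x := by
  rcases lt_trichotomy x t with h | h | h
  · rw [if_pos h.le]
    refine (hasDerivAt_const x (0 : ℝ)).congr_of_eventuallyEq ?_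
    filter_upwards [Iio_mem_nhds h] with y hy
    rw [if_pos (le_of_lt hy)]
  · subst h
    rw [if_pos le_rfl]
    have a : HasDerivWithinAt (fun y => if y ≤ x then 0 else f y) 0 (Set.Iic x) x := by
      refine (hasDerivWithinAt_const x _ (0 : ℝ)).congr ?_ ?_
      · intro y hy; exact if_pos hy
      · simp
    have b : HasDerivWithinAt (fun y => if y ≤ x then 0 else f y) 0 (Set.Ici x) x := by
      have := (hf x).hasDerivWithinAt (s := Set.Ici x)
      rw [h1] at this
      refine this.congr ?_ ?_
      · intro y hy
        rcases eq_or_lt_of_le (show x ≤ y from hy) with e | e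
        · subst e; simp [h0]
        · exact if_neg (not_le.2 e)
      · simp [h0]
    have := a.union b
    rwa [Set.Iic_union_Ici, hasDerivWithinAt_univ] at this
  · rw [if_neg (not_le.2 h)]
    refine (hf x).congr_of_eventuallyEq ?_
    filter_upwards [Ioi_mem_nhds h] with y hy
    rw [if_neg (not_le.2 hy)]

lemma bsH_contDiff (ξ : ℕ → ℝ) (hm : Monotone ξ) (t : ℝ) (k : ℕ) (n : ℕ) : ∀ i,
    (∀ m, m ≤ n + 1 → ¬ (ξ (i + m) = t ∧ ξ (i + m + k) = t)) →
    ContDiff ℝ (n : WithTop ℕ∞) (bsH ξ t i (n + k)) := by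
  have hz : ∀ n i, (∀ m, m ≤ n + 1 → ¬ (ξ (i + m) = t ∧ ξ (i + m + k) = t)) →
      bsJ ξ t i (n + k) t = 0 := by
    intro n i h
    apply bsJ_zero ξ hm
    · rintro ⟨a, b⟩
      refine h 0 (by omega) ⟨a, le_antisymm (b ▸ hm (by omega)) (a ▸ hm (by omega))⟩
    · rintro ⟨a, b⟩
      refine h 1 (by omega) ⟨a, le_antisymm (b ▸ hm (by omega)) (a ▸ hm (by omega))⟩
  induction n with
  | zero =>
    intro i h
    have h0 := hz 0 i h
    simp only [Nat.cast_zero, contDiff_zero]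
    unfold bsH
    refine Continuous.if_le continuous_const
      (bsAux_contDiff ξ _ 0 _ i).continuous continuous_id continuous_const ?_
    intro x hx
    have hx' : x = t := hx
    subst hx'
    exact h0.symm
  | succ n ih =>
    intro i h
    have e : n + 1 + k = n + k + 1 := by ring
    have g1 : ∀ m, m ≤ n + 1 → ¬ (ξ (i + m) = t ∧ ξ (i + m + k) = t) :=
      fun m hmn => h m (by omega)
    have g2 : ∀ m, m ≤ n + 1 → ¬ (ξ (i + 1 + m) = t ∧ ξ (i + 1 + m + k) = t) := by
      intro m hmn
      have := h (m + 1) (by omega)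
      rwa [show i + (m + 1) = i + 1 + m by ring] at this
    have z := hz (n + 1) i h
    have z1 := hz n i g1
    have z2 := hz n (i + 1) g2
    rw [e] at z ⊢
    have hd := piecewise_hasDerivAt (bsJ ξ t i (n + k + 1)) _ t
      (fun x => bsAux_hasDerivAt ξ _ hm (n + k) i x) z (by
        change _ * (bsJ ξ t i (n + k) t / _ - bsJ ξ t (i + 1) (n + k) t / _) = 0
        rw [z1, z2]; simp)
    have hder : deriv (bsH ξ t i (n + k + 1)) = fun x => (((n + k : ℕ) : ℝ) + 1) *
        (bsH ξ t i (n + k) x / (ξ (i + (n + k) + 1) - ξ i) -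
        bsH ξ t (i + 1) (n + k) x / (ξ (i + (n + k) + 2) - ξ (i + 1))) := by
      funext x
      refine (hd x).deriv.trans ?_
      unfold bsH
      split_ifs
      · simp
      · rfl
    push_cast
    rw [contDiff_succ_iff_deriv]
    refine ⟨fun x => (hd x).differentiableAt, by simp, ?_⟩
    rw [hder]
    exact contDiff_const.mul (((ih i g1).div_const _).sub ((ih (i + 1) g2).div_const _))

lemma bspline_local (ξ : ℕ → ℝ) (t : ℝ) (p : ℕ) : ∀ i, ∀ᶠ x in nhds t,
    bspline ξ i p x = if x < t then bsAux ξ (bsL ξ t) i p x else bsAux ξ (bsR ξ t) i p x := by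
  induction p with
  | zero =>
    have hk : ∀ j, ∀ᶠ x in nhds t, (x < t → (x < ξ j ↔ t ≤ ξ j)) ∧
        (t ≤ x → (x < ξ j ↔ t < ξ j)) := by
      intro j
      rcases lt_trichotomy (ξ j) t with h | h | h
      · filter_upwards [Ioi_mem_nhds h] with x hx
        have hx' : ξ j < x := hx
        grind
      · exact Filter.Eventually.of_forall (fun x => by grind)
      · filter_upwards [Iio_mem_nhds h] with x hx
        have hx' : x < ξ j := hx
        grind
    intro i
    filter_upwards [hk i, hk (i + 1)] with x h1 h2
    simp only [bspline, bsAux, bsL, bsR]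
    by_cases hx : x < t
    · have a := h1.1 hx
      have b := h2.1 hx
      rw [if_pos hx]
      refine if_congr (and_congr ?_ b) rfl rfl
      rw [← not_lt, a, not_le]
    · have a := h1.2 (not_lt.1 hx)
      have b := h2.2 (not_lt.1 hx)
      rw [if_neg hx]
      refine if_congr (and_congr ?_ b) rfl rfl
      rw [← not_lt, a, not_lt]
  | succ p ih =>
    intro i
    filter_upwards [ih i, ih (i + 1)] with x h1 h2
    simp only [bspline, bsAux, h1, h2]
    split_ifs <;> simp [*]

/-- Smoothness across knots: if exactly `k` of the knots `ξ i, …, ξ (i+p+1)` equal `t`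
(with `1 ≤ k ≤ p`), then `N_{i,p}` is `(p − k)`-times continuously differentiable on
some open neighborhood of `t`. -/
theorem bspline_smoothness_at_knot (ξ : ℕ → ℝ) (hξ : ∀ i, ξ i ≤ ξ (i + 1))
    (p : ℕ) (hp : 1 ≤ p) (i : ℕ) (t : ℝ) (k : ℕ) (hk₁ : 1 ≤ k) (hk₂ : k ≤ p)
    (hmult : (Finset.filter (fun m => ξ (i + m) = t) (Finset.range (p + 2))).card = k) :
    ∃ U : Set ℝ, IsOpen U ∧ t ∈ U ∧
      ContDiffOn ℝ ((p - k : ℕ) : ℕ∞) (bspline ξ i p) U := by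
  have hm : Monotone ξ := monotone_nat_of_le_succ hξ
  have hno : ∀ m, m ≤ (p - k) + 1 → ¬ (ξ (i + m) = t ∧ ξ (i + m + k) = t) := by
    rintro m hmn ⟨a, b⟩
    have hsub : Finset.Icc m (m + k) ⊆
        Finset.filter (fun m => ξ (i + m) = t) (Finset.range (p + 2)) := by
      intro j hj
      rw [Finset.mem_Icc] at hj
      rw [Finset.mem_filter, Finset.mem_range]
      exact ⟨by omega, le_antisymm (b ▸ hm (by omega)) (a ▸ hm (by omega))⟩
    have := Finset.card_le_card hsub
    rw [hmult, Nat.card_Icc] at this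
    omega
  have hH := bsH_contDiff ξ hm t k (p - k) i hno
  have hpk : p - k + k = p := by omega
  have hz : bsJ ξ t i p t = 0 := by
    apply bsJ_zero ξ hm
    · rintro ⟨a, b⟩
      refine hno 0 (by omega) ⟨a, le_antisymm (b ▸ hm (by omega)) (a ▸ hm (by omega))⟩
    · rintro ⟨a, b⟩
      refine hno 1 (by omega) ⟨a, le_antisymm (b ▸ hm (by omega)) (a ▸ hm (by omega))⟩
  rw [hpk] at hH
  obtain ⟨U, hU, hUo, htU⟩ := eventually_nhds_iff.1 (bspline_local ξ t p i)
  refine ⟨U, hUo, htU, ?_⟩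
  have hs := (bsAux_contDiff ξ (bsL ξ t) ((p - k : ℕ) : WithTop ℕ∞) p i).add hH
  have hs' : ContDiff ℝ (((p - k : ℕ) : ℕ∞) : WithTop ℕ∞)
      (fun x => bsAux ξ (bsL ξ t) i p x + bsH ξ t i p x) := by exact_mod_cast hs
  refine hs'.contDiffOn.congr ?_
  intro x hx
  rw [hU x hx]
  have hJ : bsJ ξ t i p x = bsAux ξ (bsR ξ t) i p x - bsAux ξ (bsL ξ t) i p x :=
    bsAux_sub ξ _ _ p i x
  unfold bsH
  rcases lt_trichotomy x t with h | h | h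
  · simp [h, h.le]
  · subst h
    rw [hz] at hJ
    simp
    linarith
  · rw [if_neg (not_lt.2 h.le), if_neg (not_le.2 h), hJ]
    ring
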